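/- arXiv:2202.01694 — 2 statements merged into one kernel-verified Lean document; each statement's English description precedes it below -/
import Mathlib

section
/- Let α and β be standard Borel measurable spaces, let μ₁ and ν₁ be probability measures on α, let μ₂ be a probability measure on β, and let η be a Markov kernel from α to β. Then KL(μ₁.prod μ₂ ‖ ν₁ ⊗ₘ η) = KL(μ₁ ‖ ν₁) + ∫ KL(μ₂ ‖ η x) dμ₁(x), where μ₁.prod μ₂ is the independent product measure on α × β and the sum and integral are taken in the extended reals. -/
open Classical MeasureTheory ProbabilityTheory
open scoped ENNReal

/-- The Kullback–Leibler divergence between two measures, with values in the extended reals: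
`KL(μ‖ν) = ∫ log (dμ/dν) dμ` if `μ ≪ ν` and the log-likelihood ratio is integrable,
and `+∞` otherwise. -/
noncomputable def klDiv {α : Type*} [MeasurableSpace α] (μ ν : Measure α) : EReal :=
  if μ ≪ ν ∧ Integrable (llr μ ν) μ then ((∫ x, llr μ ν x ∂μ : ℝ) : EReal) else ⊤

/-- The canonical conversion of an extended real to an extended nonnegative real
(negative values are sent to `0`).  Used to integrate `EReal`-valued nonnegative
quantities, such as KL divergences between probability measures. -/
noncomputable def erealToENNReal (x : EReal) : ℝ≥0∞ :=
  if x = ⊤ then ⊤ else ENNReal.ofReal x.toReal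

lemma klDiv_eq_it {α : Type*} [MeasurableSpace α] (μ ν : Measure α)
    [IsProbabilityMeasure μ] [IsProbabilityMeasure ν] :
    klDiv μ ν = ((InformationTheory.klDiv μ ν : ℝ≥0∞) : EReal) := by
  unfold klDiv
  split_ifs with h
  · rw [InformationTheory.klDiv_of_ac_of_integrable h.1 h.2]
    have h0 := InformationTheory.integral_llr_add_sub_measure_univ_nonneg h.1 h.2
    simp only [probReal_univ, add_sub_cancel_right] at h0 ⊢
    rw [EReal.coe_ennreal_ofReal, max_eq_left h0]
  · rw [InformationTheory.klDiv_eq_top_iff.2 (fun h1 h2 => h ⟨h1, h2⟩)]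
    rfl

lemma erealToENNReal_coe (x : ℝ≥0∞) : erealToENNReal (x : EReal) = x := by
  unfold erealToENNReal
  split_ifs with h
  · exact (EReal.coe_ennreal_eq_top_iff.1 h).symm
  · have hx : x ≠ ⊤ := fun hx => h (by simp [hx])
    rw [EReal.toReal_coe_ennreal, ENNReal.ofReal_toReal hx]

lemma klDiv_compProd_right_eq_lintegral {α β : Type*} [MeasurableSpace α]
    [MeasurableSpace β] [StandardBorelSpace β]
    (μ : Measure α) [IsProbabilityMeasure μ]
    (κ η : Kernel α β) [IsMarkovKernel κ] [IsMarkovKernel η] :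
    InformationTheory.klDiv (μ ⊗ₘ κ) (μ ⊗ₘ η)
      = ∫⁻ x, InformationTheory.klDiv (κ x) (η x) ∂μ := by
  by_cases h_ac : μ ⊗ₘ κ ≪ μ ⊗ₘ η
  · have h_ae := Measure.absolutelyContinuous_compProd_right_iff.1 h_ac
    have hm : Measurable (Function.uncurry (κ.rnDeriv η)) := Kernel.measurable_rnDeriv κ η
    have hd : μ ⊗ₘ κ = (μ ⊗ₘ η).withDensity (Function.uncurry (κ.rnDeriv η)) := by
      ext s hs
      rw [Measure.compProd_apply hs, withDensity_apply _ hs, ← lintegral_indicator hs,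
        Measure.lintegral_compProd (hm.indicator hs)]
      refine lintegral_congr_ae ?_
      filter_upwards [h_ae] with x hx
      rw [← Kernel.setLIntegral_rnDeriv hx (measurable_prodMk_left hs),
        ← lintegral_indicator (measurable_prodMk_left hs)]
      rfl
    have hr : (μ ⊗ₘ κ).rnDeriv (μ ⊗ₘ η) =ᵐ[μ ⊗ₘ η] Function.uncurry (κ.rnDeriv η) := by
      conv_lhs => rw [hd]
      exact Measure.rnDeriv_withDensity _ hm
    rw [InformationTheory.klDiv_eq_lintegral_klFun_of_ac h_ac]
    have hr' : ∀ᵐ p ∂(μ ⊗ₘ η),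
        ENNReal.ofReal (InformationTheory.klFun ((μ ⊗ₘ κ).rnDeriv (μ ⊗ₘ η) p).toReal)
        = ENNReal.ofReal (InformationTheory.klFun (Function.uncurry (κ.rnDeriv η) p).toReal) := by
      filter_upwards [hr] with p hp
      rw [hp]
    rw [lintegral_congr_ae hr', Measure.lintegral_compProd (by fun_prop)]
    refine lintegral_congr_ae ?_
    filter_upwards [h_ae] with x hx
    rw [InformationTheory.klDiv_eq_lintegral_klFun_of_ac hx]
    refine lintegral_congr_ae ?_
    filter_upwards [Kernel.rnDeriv_eq_rnDeriv_measure (κ := κ) (η := η) (a := x)] with y hy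
    simp only [Function.uncurry]
    rw [hy]
  · rw [InformationTheory.klDiv_of_not_ac h_ac]
    rw [Measure.absolutelyContinuous_compProd_right_iff] at h_ac
    have hms : MeasurableSet {x | κ x ≪ η x} := Kernel.measurableSet_absolutelyContinuous κ η
    symm
    rw [eq_top_iff]
    calc (⊤ : ℝ≥0∞) = ⊤ * μ {x | κ x ≪ η x}ᶜ := by
          rw [ENNReal.top_mul]
          exact h_ac
      _ = ∫⁻ x in {x | κ x ≪ η x}ᶜ, ⊤ ∂μ := by rw [setLIntegral_const]
      _ ≤ ∫⁻ x in {x | κ x ≪ η x}ᶜ, InformationTheory.klDiv (κ x) (η x) ∂μ := by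
          refine setLIntegral_mono' hms.compl fun x hx => ?_
          rw [InformationTheory.klDiv_of_not_ac hx]
      _ ≤ _ := setLIntegral_le_lintegral _ _

/-- KL divergence of an independent product measure from a composition-product measure:
for probability measures `μ₁, ν₁` on a standard Borel space `α`, a probability measure `μ₂`
on a standard Borel space `β` and a Markov kernel `η` from `α` to `β`,
`KL(μ₁ × μ₂ ‖ ν₁ ⊗ₘ η) = KL(μ₁ ‖ ν₁) + ∫ KL(μ₂ ‖ η x) ∂μ₁`, the sum and the integral being
taken in the extended reals. -/
theorem klDiv_prod_compProd {α β : Type*} [MeasurableSpace α] [StandardBorelSpace α]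
    [MeasurableSpace β] [StandardBorelSpace β]
    (μ₁ ν₁ : Measure α) [IsProbabilityMeasure μ₁] [IsProbabilityMeasure ν₁]
    (μ₂ : Measure β) [IsProbabilityMeasure μ₂]
    (η : Kernel α β) [IsMarkovKernel η] :
    klDiv (μ₁.prod μ₂) (ν₁ ⊗ₘ η)
      = klDiv μ₁ ν₁ + ((∫⁻ x, erealToENNReal (klDiv μ₂ (η x)) ∂μ₁ : ℝ≥0∞) : EReal) := by
  simp only [klDiv_eq_it, erealToENNReal_coe]
  rw [← Measure.compProd_const, InformationTheory.klDiv_compProd_eq_add,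
    klDiv_compProd_right_eq_lintegral, EReal.coe_ennreal_add]
  rfl
end

section
/- Let K be a positive integer, let b, m : Fin K → ℝ, let s : Fin K → ℝ with s k ≥ 0 for all k, let m₀ ∈ ℝ, s₀ > 0, and f > 0. Let U be the product measure ⊗_k N(m k, s k) on Fin K → ℝ. Then the expected conditional Gaussian KL divergence has the closed form ∫ KL( N(m₀, s₀) ‖ N(∑_k b k * u k, f) ) dU(u) = ½ · ( log f − log s₀ − 1 + (1/f) · ( s₀ + ∑_k (b k)² * s k + (m₀ − ∑_k b k * m k)² ) ). -/
open Classical MeasureTheory ProbabilityTheory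
open scoped NNReal

theorem aux_integrable_sq {Ω : Type*} [MeasurableSpace Ω] (μ : Measure Ω) [IsProbabilityMeasure μ]
    (X : Ω → ℝ) (hX : MemLp X 2 μ) (c : ℝ) : Integrable (fun ω => (X ω - c) ^ 2) μ :=
  (hX.sub (memLp_const c)).integrable_sq

theorem aux_integral_sq {Ω : Type*} [MeasurableSpace Ω] (μ : Measure Ω) [IsProbabilityMeasure μ]
    (X : Ω → ℝ) (hX : MemLp X 2 μ) (c : ℝ) :
    ∫ ω, (X ω - c) ^ 2 ∂μ = Var[X; μ] + ((∫ ω, X ω ∂μ) - c) ^ 2 := by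
  have hY : MemLp (fun ω => X ω - c) 2 μ := hX.sub (memLp_const c)
  have h1 := variance_eq_sub hY
  rw [variance_sub_const hX.aestronglyMeasurable] at h1
  have h2 : ∫ ω, (X ω - c) ∂μ = (∫ ω, X ω ∂μ) - c := by
    rw [integral_sub (hX.integrable (by norm_num)) (integrable_const c)]
    simp
  rw [h2] at h1
  simp only [Pi.pow_apply] at h1
  linarith

theorem aux_memLp (m : ℝ) (s : ℝ≥0) : MemLp (fun x : ℝ => x) 2 (gaussianReal m s) :=
  memLp_id_gaussianReal' 2 (by norm_num)

theorem aux_log_pdf (a : ℝ) (v : ℝ≥0) (hv : 0 < v) (x : ℝ) :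
    Real.log (gaussianPDFReal a v x) =
      - (1 / 2) * (Real.log (2 * Real.pi) + Real.log v) - (x - a) ^ 2 / (2 * v) := by
  have hv' : (0 : ℝ) < v := hv
  have hp := Real.pi_pos
  rw [gaussianPDFReal, Real.log_mul (by positivity) (by positivity), Real.log_exp, Real.log_inv,
    Real.log_sqrt (by positivity), Real.log_mul (by positivity) (by positivity)]
  ring

theorem aux_llr (a c : ℝ) (v w : ℝ≥0) (hv : 0 < v) (hw : 0 < w) :
    llr (gaussianReal a v) (gaussianReal c w) =ᵐ[gaussianReal a v]
      fun x => (1 / 2) * (Real.log w - Real.log v) - (1 / (2 * v)) * (x - a) ^ 2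
        + (1 / (2 * w)) * (x - c) ^ 2 := by
  have hac : gaussianReal a v ≪ volume := gaussianReal_absolutelyContinuous a hv.ne'
  have hac2 : gaussianReal a v ≪ gaussianReal c w :=
    hac.trans (gaussianReal_absolutelyContinuous' c hw.ne')
  filter_upwards [hac (Measure.rnDeriv_mul_rnDeriv (κ := volume) hac2),
    hac (rnDeriv_gaussianReal a v), hac (rnDeriv_gaussianReal c w)] with x h1 h2 h3
  rw [Pi.mul_apply, h2, h3] at h1
  have h4 := congrArg ENNReal.toReal h1
  rw [ENNReal.toReal_mul, toReal_gaussianPDF, toReal_gaussianPDF] at h4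
  have p1 := gaussianPDFReal_pos a v x hv.ne'
  have p2 := gaussianPDFReal_pos c w x hw.ne'
  have h5 : ((gaussianReal a v).rnDeriv (gaussianReal c w) x).toReal
      = gaussianPDFReal a v x / gaussianPDFReal c w x := by
    rw [← h4, mul_div_cancel_right₀ _ p2.ne']
  rw [llr, h5, Real.log_div p1.ne' p2.ne', aux_log_pdf a v hv, aux_log_pdf c w hw]
  ring

theorem aux_kl (a c : ℝ) (v w : ℝ≥0) (hv : 0 < v) (hw : 0 < w) :
    (klDiv (gaussianReal a v) (gaussianReal c w)).toReal =
      (1 / 2) * (Real.log w - Real.log v) - 1 / 2 + (1 / (2 * w)) * (v + (a - c) ^ 2) := by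
  have hv' : (0 : ℝ) < v := hv
  have hac2 : gaussianReal a v ≪ gaussianReal c w :=
    (gaussianReal_absolutelyContinuous a hv.ne').trans (gaussianReal_absolutelyContinuous' c hw.ne')
  have i1 := (aux_integrable_sq _ _ (aux_memLp a v) a).const_mul (1 / (2 * (v : ℝ)))
  have i2 := (aux_integrable_sq _ _ (aux_memLp a v) c).const_mul (1 / (2 * (w : ℝ)))
  have i0 := integrable_const (μ := gaussianReal a v) ((1 / 2) * (Real.log w - Real.log v))
  have hint : Integrable (llr (gaussianReal a v) (gaussianReal c w)) (gaussianReal a v) :=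
    ((i0.sub i1).add i2).congr (aux_llr a c v w hv hw).symm
  rw [klDiv, if_pos ⟨hac2, hint⟩, EReal.toReal_coe, integral_congr_ae (aux_llr a c v w hv hw),
    integral_add (by exact i0.sub i1) i2, integral_sub i0 i1, integral_const_mul, integral_const_mul, integral_const_mul,
    aux_integral_sq _ _ (aux_memLp a v), aux_integral_sq _ _ (aux_memLp a v),
    variance_fun_id_gaussianReal, integral_id_gaussianReal]
  simp
  field_simp

/-- Closed form of the expected conditional Gaussian KL divergence: if
`u k ~ N(m k, s k)` independently, then
`E[KL(N(m₀, s₀) ‖ N(∑ₖ bₖ uₖ, f))]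
  = ½ (log f − log s₀ − 1 + (1/f)(s₀ + ∑ₖ bₖ² sₖ + (m₀ − ∑ₖ bₖ mₖ)²))`. -/
theorem integral_klDiv_gaussianReal_pi (K : ℕ) (hK : 0 < K)
    (b m : Fin K → ℝ) (s : Fin K → ℝ≥0) (m₀ : ℝ) (s₀ f : ℝ≥0)
    (hs₀ : 0 < s₀) (hf : 0 < f) :
    ∫ u : Fin K → ℝ,
        (klDiv (gaussianReal m₀ s₀) (gaussianReal (∑ k, b k * u k) f)).toReal
        ∂(Measure.pi fun k => gaussianReal (m k) (s k))
      = 1 / 2 * (Real.log (f : ℝ) - Real.log (s₀ : ℝ) - 1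
          + (1 / (f : ℝ)) * ((s₀ : ℝ) + ∑ k, (b k) ^ 2 * (s k : ℝ)
            + (m₀ - ∑ k, b k * m k) ^ 2)) := by
  have hL : ∀ k, MemLp (fun x : ℝ => b k * x) 2 (gaussianReal (m k) (s k)) :=
    fun k => (aux_memLp _ _).const_mul _
  have hLk : ∀ k, MemLp (fun u : Fin K → ℝ => b k * u k) 2
      (Measure.pi fun k => gaussianReal (m k) (s k)) := fun k =>
    (hL k).comp_measurePreserving (measurePreserving_eval _ k)
  have hX : MemLp (fun u : Fin K → ℝ => ∑ k, b k * u k) 2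
      (Measure.pi fun k => gaussianReal (m k) (s k)) :=
    memLp_finsetSum _ fun k _ => hLk k
  have hvar : Var[fun u : Fin K → ℝ => ∑ k, b k * u k;
      Measure.pi fun k => gaussianReal (m k) (s k)] = ∑ k, (b k) ^ 2 * (s k : ℝ) := by
    have h := variance_sum_pi hL
    have e : (∑ i, fun ω : Fin K → ℝ => b i * ω i) = fun u : Fin K → ℝ => ∑ k, b k * u k := by
      ext u; simp
    rw [e] at h
    rw [h]
    refine Finset.sum_congr rfl fun k _ => ?_
    rw [variance_const_mul, variance_fun_id_gaussianReal]
  have hmean : ∫ u : Fin K → ℝ, ∑ k, b k * u k ∂(Measure.pi fun k => gaussianReal (m k) (s k))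
      = ∑ k, b k * m k := by
    rw [integral_finsetSum _ fun k _ => (hLk k).integrable (by norm_num)]
    refine Finset.sum_congr rfl fun k _ => ?_
    rw [integral_comp_eval (μ := fun k => gaussianReal (m k) (s k)) (f := fun x : ℝ => b k * x)
      (hL k).aestronglyMeasurable, integral_const_mul, integral_id_gaussianReal]
  have i2 := aux_integrable_sq _ _ hX m₀
  have key : ∀ u : Fin K → ℝ,
      (klDiv (gaussianReal m₀ s₀) (gaussianReal (∑ k, b k * u k) f)).toReal
      = ((1 / 2) * (Real.log f - Real.log s₀) - 1 / 2 + (1 / (2 * f)) * s₀)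
        + (1 / (2 * (f : ℝ))) * ((∑ k, b k * u k) - m₀) ^ 2 := fun u => by
    rw [aux_kl _ _ _ _ hs₀ hf]; ring
  simp_rw [key]
  rw [integral_add (integrable_const _) (i2.const_mul _), integral_const_mul,
    aux_integral_sq _ _ hX, hvar, hmean]
  simp
  ring
end
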